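/- arXiv:1501.02547 — 3 statements merged into one kernel-verified Lean document; each statement's English description precedes it below -/
import Mathlib

section
/- Let k be a field of characteristic 2 and let A = k[x]/(x^2). Then for every natural number n, the n-th Hochschild homology HH_n(A, A) is a k-vector space of dimension 2 (indeed HH_n(A,A) ≅ A as k-vector spaces for every n). -/
open TensorProduct MulOpposite CategoryTheory

section Machinery

variable (k : Type) [CommRing k] (S : Type) [Ring S] [Algebra k S] (P : Set (S × S))

/-- The `k`-submodule of (the restriction of scalars of) an `S`-module `N` generated by all
differences `p.1 • n - p.2 • n` for pairs `p ∈ P` and `n ∈ N`. -/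
noncomputable def relSub (N : ModuleCat S) :
    Submodule k ((ModuleCat.restrictScalars (algebraMap k S)).obj N) :=
  Submodule.span k {x | ∃ p ∈ P, ∃ n : N, x = p.1 • n - p.2 • n}

/-- The "coinvariants"-type additive functor sending an `S`-module `N` to its quotient,
as a `k`-module, by the span of all elements `p.1 • n - p.2 • n` for `p ∈ P`, `n ∈ N`. -/
noncomputable def coinvFunctor : ModuleCat S ⥤ ModuleCat k where
  obj N := ModuleCat.of k (((ModuleCat.restrictScalars (algebraMap k S)).obj N) ⧸ relSub k S P N)
  map {N N'} f := ModuleCat.ofHom <| Submodule.mapQ (relSub k S P N) (relSub k S P N')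
      ((ModuleCat.restrictScalars (algebraMap k S)).map f).hom (by
    rw [relSub, Submodule.span_le]
    rintro x ⟨p, hp, n, rfl⟩
    have : ((ModuleCat.restrictScalars (algebraMap k S)).map f).hom (p.1 • n - p.2 • n)
        = p.1 • (f n) - p.2 • (f n) := by
      show f (p.1 • n - p.2 • n) = _
      rw [map_sub, map_smul, map_smul]
    exact Submodule.subset_span ⟨p, hp, f n, this⟩)
  map_id _ := ModuleCat.hom_ext (Submodule.linearMap_qext _ (LinearMap.ext fun _ => rfl))
  map_comp _ _ := ModuleCat.hom_ext (Submodule.linearMap_qext _ (LinearMap.ext fun _ => rfl))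

instance : (coinvFunctor k S P).Additive where
  map_add := ModuleCat.hom_ext (Submodule.linearMap_qext _ (LinearMap.ext fun _ => rfl))

end Machinery

/-- Hochschild homology `HH_n(A, A)` of a `k`-algebra `A`: the `n`-th left derived functor
(that is, `Tor_n` over the enveloping algebra `A ⊗[k] Aᵐᵒᵖ`) of the coinvariants functor
`N ↦ N / span { a•n - n•a }` (which is naturally isomorphic to `A ⊗_{A ⊗[k] Aᵐᵒᵖ} -`),
evaluated at the `A`-bimodule `A` itself. -/
noncomputable def HochschildHomology (k : Type) [CommRing k] (A : Type) [Ring A] [Algebra k A]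
    (n : ℕ) : ModuleCat k :=
  letI : Module (A ⊗[k] Aᵐᵒᵖ) A := TensorProduct.Algebra.module
  ((coinvFunctor k (A ⊗[k] Aᵐᵒᵖ)
      {p | ∃ a : A, p = (a ⊗ₜ[k] (1 : Aᵐᵒᵖ), (1 : A) ⊗ₜ[k] op a)}).leftDerived n).obj
    (ModuleCat.of (A ⊗[k] Aᵐᵒᵖ) A)

section PeriodicRes

open HomologicalComplex

variable {S : Type} [Ring S] (u : S) (huu : u * u = 0)

/-- Right multiplication by `u`. -/
noncomputable def rmul : ModuleCat.of S S ⟶ ModuleCat.of S S :=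
  ModuleCat.ofHom (LinearMap.toSpanSingleton S S u)

lemma rmul_apply (s : S) : (rmul u).hom s = s * u := rfl

include huu in
lemma rmul_comp : rmul u ≫ rmul u = 0 := by
  ext
  show (1 * u) * u = 0
  rw [one_mul, huu]

/-- The periodic complex. -/
noncomputable def perCx : ChainComplex (ModuleCat S) ℕ :=
  HomologicalComplex.alternatingConst (ModuleCat.of S S) (φ := rmul u) (ψ := rmul u)
    (rmul_comp u huu) (rmul_comp u huu) fun _ _ => ComplexShape.down_nat_odd_add

lemma perCx_d (n : ℕ) : (perCx u huu).d (n + 1) n = rmul u := by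
  simp [perCx, HomologicalComplex.alternatingConst]

variable {M : ModuleCat S} (e : ModuleCat.of S S ⟶ M) (hue : e.hom u = 0)

include hue in
lemma rmul_e : rmul u ≫ e = 0 := by
  ext
  show e.hom (1 * u) = 0
  rw [one_mul, hue]

/-- Augmentation. -/
noncomputable def perPi : perCx u huu ⟶ (ChainComplex.single₀ (ModuleCat S)).obj M :=
  ((perCx u huu).toSingle₀Equiv _).symm ⟨e, by
    rw [perCx_d]; exact rmul_e u e hue⟩

lemma perPi_quasiIso (hs : Function.Surjective e.hom)
    (h1 : ∀ s, e.hom s = 0 → ∃ t, t * u = s) (h2 : ∀ s : S, s * u = 0 → ∃ t, t * u = s) :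
    QuasiIso (perPi u huu e hue) where
  quasiIsoAt m := by
    cases m with
    | zero =>
      rw [ChainComplex.quasiIsoAt₀_iff, ShortComplex.quasiIso_iff_of_zeros' _ rfl rfl rfl]
      constructor
      · rw [ShortComplex.moduleCat_exact_iff]
        intro s hs
        obtain ⟨t, ht⟩ := h1 s (by simpa [perPi, ChainComplex.toSingle₀Equiv] using! hs)
        refine ⟨t, ?_⟩
        refine Eq.trans ?_ ht
        show ((perCx u huu).d 1 0).hom t = _
        rw [perCx_d]; rfl
      · rw [ModuleCat.epi_iff_surjective]
        intro m
        obtain ⟨s, hs⟩ := hs m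
        refine ⟨s, ?_⟩
        simpa [perPi, ChainComplex.toSingle₀Equiv] using! hs
    | succ m =>
      rw [quasiIsoAt_iff_exactAt' (hL := ChainComplex.exactAt_succ_single_obj ..),
          HomologicalComplex.exactAt_iff' _ (m + 2) (m + 1) m (by simp) (by simp)]
      rw [ShortComplex.moduleCat_exact_iff]
      intro s hs
      obtain ⟨t, ht⟩ := h2 s (by
        change ((perCx u huu).d (m+1) m).hom s = 0 at hs
        rw [perCx_d] at hs; exact hs)
      refine ⟨t, ?_⟩
      refine Eq.trans ?_ ht
      show ((perCx u huu).d (m+2) (m+1)).hom t = _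
      rw [perCx_d]; rfl

/-- The periodic resolution. -/
noncomputable def perRes (hs : Function.Surjective e.hom)
    (h1 : ∀ s, e.hom s = 0 → ∃ t, t * u = s) (h2 : ∀ s : S, s * u = 0 → ∃ t, t * u = s) :
    ProjectiveResolution M where
  complex := perCx u huu
  projective _ := (inferInstance : Projective (ModuleCat.of S S))
  π := perPi u huu e hue
  quasiIso := perPi_quasiIso u huu e hue hs h1 h2

include huu hue in
lemma perRes_derived {k : Type} [CommRing k] (F : ModuleCat S ⥤ ModuleCat k) [F.Additive]
    (hF : F.map (rmul u) = 0) (hs : Function.Surjective e.hom)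
    (h1 : ∀ s, e.hom s = 0 → ∃ t, t * u = s) (h2 : ∀ s : S, s * u = 0 → ∃ t, t * u = s)
    (n : ℕ) :
    Nonempty ((F.leftDerived n).obj M ≅ F.obj (ModuleCat.of S S)) := by
  let i1 := (perRes u huu e hue hs h1 h2).isoLeftDerivedObj F n
  let K := (F.mapHomologicalComplex (ComplexShape.down ℕ)).obj (perCx u huu)
  have hd : ∀ i j, K.d i j = 0 := by
    intro i j
    by_cases h : (ComplexShape.down ℕ).Rel i j
    · obtain rfl : j + 1 = i := h
      show F.map ((perCx u huu).d (j+1) j) = 0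
      rw [perCx_d]; exact hF
    · exact K.shape _ _ h
  let i2 : K.homology n ≅ K.X n :=
    (ShortComplex.HomologyData.ofZeros (K.sc n) (hd _ _) (hd _ _)).left.homologyIso
  exact ⟨i1 ≪≫ i2⟩

end PeriodicRes

section Dual

variable {k : Type} [Field k] [CharP k 2] {A : Type} [CommRing A] [Algebra k A]
  (x : A) (hx : x * x = 0) (c : A →ₗ[k] k) (c1 : c 1 = 0) (cx : c x = 1)
  (hc : ∀ a, ∃ r : k, a = algebraMap k A r + c a • x)

/-- The element `x ⊗ 1 - 1 ⊗ x`. -/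
noncomputable def uu (k : Type) [Field k] {A : Type} [CommRing A] [Algebra k A] (x : A) :
    A ⊗[k] Aᵐᵒᵖ := x ⊗ₜ 1 - 1 ⊗ₜ op x

omit [CharP k 2] in
include c1 cx in
lemma uu_inj (b : Aᵐᵒᵖ) (h : ((1 : A) ⊗ₜ[k] b) * uu k x = 0) : b = 0 := by
  have h2 := congrArg ((TensorProduct.lid k Aᵐᵒᵖ).toLinearMap ∘ₗ TensorProduct.map c LinearMap.id) h
  simpa [uu, mul_sub, c1, cx] using h2

include hx in
lemma uu_sq : uu k x * uu k x = 0 := by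
  have h2 : (2 : A ⊗[k] Aᵐᵒᵖ) = 0 := by
    have := congrArg (algebraMap k (A ⊗[k] Aᵐᵒᵖ)) (CharTwo.two_eq_zero (R := k))
    rwa [map_zero, map_ofNat] at this
  have : uu k x * uu k x = - (2 * (x ⊗ₜ op x)) := by
    simp only [uu, mul_sub, sub_mul, Algebra.TensorProduct.tmul_mul_tmul, hx, mul_one, one_mul,
      ← op_mul]
    simp [two_mul]
    abel
  rw [this, h2, zero_mul, neg_zero]

attribute [local instance] TensorProduct.Algebra.module

/-- Augmentation. -/
noncomputable def ee (k : Type) [Field k] (A : Type) [CommRing A] [Algebra k A] :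
    (A ⊗[k] Aᵐᵒᵖ) →ₗ[A ⊗[k] Aᵐᵒᵖ] A :=
  LinearMap.toSpanSingleton _ _ 1

omit [CharP k 2] in
lemma ee_tmul (a : A) (b : Aᵐᵒᵖ) : ee k A (a ⊗ₜ b) = a * unop b := by
  simp only [ee, LinearMap.toSpanSingleton_apply]
  rw [TensorProduct.Algebra.smul_def]
  simp

omit [CharP k 2] in
include hc in
lemma ee_decomp (s : A ⊗[k] Aᵐᵒᵖ) : ∃ t, s = 1 ⊗ₜ op (ee k A s) + t * uu k x := by
  induction s with
  | zero => exact ⟨0, by simp⟩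
  | add s t hs ht =>
    obtain ⟨s', hs⟩ := hs
    obtain ⟨t', ht⟩ := ht
    refine ⟨s' + t', ?_⟩
    rw [map_add, MulOpposite.op_add, TensorProduct.tmul_add, add_mul]
    nth_rw 1 [hs, ht]
    abel
  | tmul a b =>
    obtain ⟨r, hr⟩ := hc a
    refine ⟨c a • (1 ⊗ₜ b), ?_⟩
    rw [ee_tmul]
    generalize c a = q at hr
    subst hr
    induction b using MulOpposite.rec' with | _ b =>
    simp only [uu, mul_sub, smul_mul_assoc, Algebra.TensorProduct.tmul_mul_tmul, one_mul, mul_one,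
      unop_op, add_mul, TensorProduct.add_tmul, MulOpposite.op_add, TensorProduct.tmul_add, smul_sub,
      ← TensorProduct.smul_tmul', MulOpposite.op_smul, TensorProduct.tmul_smul, ← op_mul,
      Algebra.algebraMap_eq_smul_one]
    abel

include hx c1 cx hc in
lemma hoch_main (n : ℕ) : Nonempty (HochschildHomology k A n ≃ₗ[k] A) := by
  have hue : ee k A (uu k x) = 0 := by simp [uu, ee_tmul]
  have huu := uu_sq (k := k) x hx
  have h1 : ∀ s, ee k A s = 0 → ∃ t, t * uu k x = s := by
    intro s hs
    obtain ⟨t, ht⟩ := ee_decomp x c hc s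
    rw [hs] at ht
    exact ⟨t, by simpa using ht.symm⟩
  have h2 : ∀ s, s * uu k x = 0 → ∃ t, t * uu k x = s := by
    intro s hs
    apply h1
    obtain ⟨t, ht⟩ := ee_decomp x c hc s
    rw [ht, add_mul, mul_assoc, huu, mul_zero, add_zero] at hs
    simpa using uu_inj x c c1 cx _ hs
  have hsurj : Function.Surjective (ee k A) := fun a => ⟨a ⊗ₜ 1, by simp [ee_tmul]⟩
  set P : Set ((A ⊗[k] Aᵐᵒᵖ) × (A ⊗[k] Aᵐᵒᵖ)) :=
    {p | ∃ a : A, p = (a ⊗ₜ[k] (1 : Aᵐᵒᵖ), (1 : A) ⊗ₜ[k] op a)} with hP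
  have hmem : ∀ s : A ⊗[k] Aᵐᵒᵖ, s * uu k x ∈ relSub k (A ⊗[k] Aᵐᵒᵖ) P (ModuleCat.of _ (A ⊗[k] Aᵐᵒᵖ)) := by
    intro s
    refine Submodule.subset_span ⟨_, ⟨x, rfl⟩, s, ?_⟩
    show s * uu k x = _ * s - _ * s
    rw [mul_comm, uu, sub_mul]
  have hF : (coinvFunctor k (A ⊗[k] Aᵐᵒᵖ) P).map (rmul (uu k x)) = 0 := by
    refine ModuleCat.hom_ext (Submodule.linearMap_qext _ (LinearMap.ext fun s => ?_))
    exact (Submodule.Quotient.mk_eq_zero _).2 (hmem s)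
  obtain ⟨i⟩ := perRes_derived (uu k x) huu (M := ModuleCat.of (A ⊗[k] Aᵐᵒᵖ) A)
    (ModuleCat.ofHom (ee k A)) hue (coinvFunctor k (A ⊗[k] Aᵐᵒᵖ) P) hF hsurj h1 h2 n
  let g : ((ModuleCat.restrictScalars (algebraMap k (A ⊗[k] Aᵐᵒᵖ))).obj
      (ModuleCat.of _ (A ⊗[k] Aᵐᵒᵖ))) →ₗ[k] A :=
    { toFun := fun s => ee k A s
      map_add' := fun s t => map_add (ee k A) s t
      map_smul' := fun r s => by
        refine ((ee k A).map_smul (algebraMap k (A ⊗[k] Aᵐᵒᵖ) r) s).trans ?_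
        rw [Algebra.TensorProduct.algebraMap_apply, TensorProduct.Algebra.smul_def]
        rw [one_smul, smul_eq_mul]
        exact (Algebra.smul_def _ _).symm }
  have hker : relSub k (A ⊗[k] Aᵐᵒᵖ) P (ModuleCat.of _ (A ⊗[k] Aᵐᵒᵖ)) = LinearMap.ker g := by
    apply le_antisymm
    · rw [relSub, Submodule.span_le]
      rintro _ ⟨_, ⟨a, rfl⟩, s, rfl⟩
      show ee k A ((a ⊗ₜ[k] (1 : Aᵐᵒᵖ)) • (s : A ⊗[k] Aᵐᵒᵖ) - ((1 : A) ⊗ₜ[k] op a) • (s : A ⊗[k] Aᵐᵒᵖ)) = 0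
      rw [map_sub, map_smul, map_smul, TensorProduct.Algebra.smul_def,
        TensorProduct.Algebra.smul_def]
      simp [mul_comm]
    · intro s hs
      obtain ⟨t, rfl⟩ := h1 s hs
      exact hmem t
  have hg : Function.Surjective g := hsurj
  exact ⟨i.toLinearEquiv.trans ((Submodule.quotEquivOfEq _ _ hker).trans
    (g.quotKerEquivOfSurjective hg))⟩

end Dual

/-- For a field `k` of characteristic 2 and `A = k[x]/(x²)`, the Hochschild homology
`HH_n(A, A)` is a 2-dimensional `k`-vector space, indeed isomorphic to `A` as a
`k`-vector space, for every `n`. -/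
theorem hochschildHomology_dualNumbers (k : Type) [Field k] [CharP k 2] (n : ℕ) :
    Module.finrank k
      (HochschildHomology k (Polynomial k ⧸ Ideal.span {(Polynomial.X : Polynomial k) ^ 2}) n)
      = 2 ∧
    Nonempty
      ((HochschildHomology k (Polynomial k ⧸ Ideal.span {(Polynomial.X : Polynomial k) ^ 2}) n)
        ≃ₗ[k] (Polynomial k ⧸ Ideal.span {(Polynomial.X : Polynomial k) ^ 2})) := by
  classical
  let I : Ideal (Polynomial k) := Ideal.span {(Polynomial.X : Polynomial k) ^ 2}
  have hI : ∀ p, p ∈ I → p.coeff 1 = 0 := by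
    intro p hp
    exact Polynomial.X_pow_dvd_iff.1 (Ideal.mem_span_singleton.1 hp) 1 (by norm_num)
  let c : (Polynomial k ⧸ I) →ₗ[k] k :=
    Submodule.liftQ (I.restrictScalars k) (Polynomial.lcoeff k 1) hI
  have hcm : ∀ p : Polynomial k, c (Ideal.Quotient.mk I p) = p.coeff 1 := fun p => rfl
  obtain ⟨i⟩ := hoch_main (k := k) (A := Polynomial k ⧸ I)
    (Ideal.Quotient.mk I Polynomial.X)
    (by rw [← map_mul, ← pow_two]
        exact Ideal.Quotient.eq_zero_iff_mem.2 (Ideal.subset_span rfl)) c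
    (by rw [← map_one (Ideal.Quotient.mk I), hcm]; simp [Polynomial.coeff_one])
    (by rw [hcm]; simp)
    (by
      intro a
      obtain ⟨p, rfl⟩ := Ideal.Quotient.mk_surjective a
      refine ⟨p.coeff 0, ?_⟩
      rw [hcm]
      have : algebraMap k (Polynomial k ⧸ I) (p.coeff 0) +
          p.coeff 1 • (Ideal.Quotient.mk I Polynomial.X) =
          Ideal.Quotient.mk I (Polynomial.C (p.coeff 0) + p.coeff 1 • Polynomial.X) := rfl
      rw [this, Ideal.Quotient.eq, Ideal.mem_span_singleton, Polynomial.X_pow_dvd_iff]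
      intro d hd
      interval_cases d <;> simp) n
  have hdim : Module.finrank k (Polynomial k ⧸ I) = 2 := by
    rw [finrank_quotient_span_eq_natDegree]
    simp
  exact ⟨i.finrank_eq.trans hdim, ⟨i⟩⟩
end

section
/- The F₂-algebra presented by two generators a, b subject to the relations a² = 0, b² = 0, and abab = baba (i.e., the quotient of the free F₂-algebra on two generators by the two-sided ideal generated by a², b², and abab + baba) is isomorphic as an F₂-algebra to the group algebra F₂[D₈] of the dihedral group of order 8. -/
/-- The relations `a² = 0`, `b² = 0`, `abab = baba` defining the associated graded algebra
of `A(1)` for the May filtration; here `a` is generator `0` and `b` is generator `1` of the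
free `F₂`-algebra on two generators. -/
inductive E0A1Rel : FreeAlgebra (ZMod 2) (Fin 2) → FreeAlgebra (ZMod 2) (Fin 2) → Prop
  | asq : E0A1Rel (FreeAlgebra.ι (ZMod 2) 0 * FreeAlgebra.ι (ZMod 2) 0) 0
  | bsq : E0A1Rel (FreeAlgebra.ι (ZMod 2) 1 * FreeAlgebra.ι (ZMod 2) 1) 0
  | abab : E0A1Rel
      (FreeAlgebra.ι (ZMod 2) 0 * FreeAlgebra.ι (ZMod 2) 1 *
        FreeAlgebra.ι (ZMod 2) 0 * FreeAlgebra.ι (ZMod 2) 1)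
      (FreeAlgebra.ι (ZMod 2) 1 * FreeAlgebra.ι (ZMod 2) 0 *
        FreeAlgebra.ι (ZMod 2) 1 * FreeAlgebra.ι (ZMod 2) 0)

theorem dihAux {M : Type*} [Monoid M] {S R : M} (hR : R ^ 4 = 1) (hRS : R * S = S * R ^ 3)
    (i : ℕ) : R ^ i * S = S * R ^ (3 * i) := by
  induction i with
  | zero => simp
  | succ k ih =>
    rw [pow_succ, mul_assoc, hRS, ← mul_assoc, ih, mul_assoc, ← pow_add]
    rfl

theorem powModAux {M : Type*} [Monoid M] {R : M} (hR : R ^ 4 = 1) {m n : ℕ}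
    (h : m % 4 = n % 4) : R ^ m = R ^ n := by
  rw [pow_eq_pow_mod m hR, pow_eq_pow_mod n hR, h]

def dihFun {M : Type*} [Monoid M] (S R : M) : DihedralGroup 4 → M
  | .r i => R ^ i.val
  | .sr i => S * R ^ i.val

def dihHom {M : Type*} [Monoid M] (S R : M) (hS : S * S = 1) (hR : R ^ 4 = 1)
    (hRS : R * S = S * R ^ 3) : DihedralGroup 4 →* M where
  toFun := dihFun S R
  map_one' := by
    show R ^ (0 : ZMod 4).val = 1
    simp
  map_mul' := by
    have key : ∀ i j : ZMod 4, (i + j).val % 4 = (i.val + j.val) % 4 := by decide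
    have key2 : ∀ i j : ZMod 4, (j - i).val % 4 = (3 * i.val + j.val) % 4 := by decide
    rintro (i | i) (j | j)
    · show R ^ (i + j).val = R ^ i.val * R ^ j.val
      rw [← pow_add]; exact powModAux hR (key i j)
    · show S * R ^ (j - i).val = R ^ i.val * (S * R ^ j.val)
      rw [← mul_assoc, dihAux hR hRS, mul_assoc, ← pow_add, powModAux hR (key2 i j)]
    · show S * R ^ (i + j).val = S * R ^ i.val * R ^ j.val
      rw [mul_assoc, ← pow_add, powModAux hR (key i j)]
    · show R ^ (j - i).val = S * R ^ i.val * (S * R ^ j.val)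
      rw [mul_assoc, ← mul_assoc (R ^ i.val), dihAux hR hRS, mul_assoc, ← pow_add,
        ← mul_assoc, hS, one_mul, powModAux hR (key2 i j)]

theorem dihExt {M : Type*} [Monoid M] (f g : DihedralGroup 4 →* M)
    (h0 : f (.sr 0) = g (.sr 0)) (h1 : f (.sr 1) = g (.sr 1)) : f = g := by
  have hr : f (.r 1) = g (.r 1) := by
    have : (DihedralGroup.r 1 : DihedralGroup 4) = .sr 0 * .sr 1 := by decide
    rw [this, map_mul, map_mul, h0, h1]
  have e1 : ∀ i : ZMod 4, DihedralGroup.r i = (DihedralGroup.r 1 : DihedralGroup 4) ^ i.val := by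
    decide
  have e2 : ∀ i : ZMod 4, DihedralGroup.sr i =
      DihedralGroup.sr 0 * (DihedralGroup.r 1 : DihedralGroup 4) ^ i.val := by
    decide
  ext x
  rcases x with i | i
  · rw [e1, map_pow, map_pow, hr]
  · rw [e2, map_mul, map_mul, map_pow, map_pow, hr, h0]

/-- In characteristic two, `(1+a)(1+b)(1+a)(1+b) - (1+b)(1+a)(1+b)(1+a) = abab - baba`. -/
theorem braidAux {A : Type*} [Ring A] (h2 : (2 : A) = 0) {a b : A} (ha : a * a = 0)
    (hb : b * b = 0) :
    (1 + a) * (1 + b) * (1 + a) * (1 + b) + (1 + b) * (1 + a) * (1 + b) * (1 + a)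
      = a * b * a * b + b * a * b * a := by
  have ha' : ∀ x : A, a * (a * x) = 0 := fun x => by rw [← mul_assoc, ha, zero_mul]
  have hb' : ∀ x : A, b * (b * x) = 0 := fun x => by rw [← mul_assoc, hb, zero_mul]
  have h : (1 + a) * (1 + b) * (1 + a) * (1 + b) + (1 + b) * (1 + a) * (1 + b) * (1 + a)
      - (a * b * a * b + b * a * b * a)
      = 2 * (1 + 2 * a + 2 * b + 2 * (a * b) + 2 * (b * a) + a * b * a + b * a * b) := by
    simp only [mul_add, add_mul, mul_one, one_mul, mul_assoc, ha, hb, ha', hb', mul_zero]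
    noncomm_ring
    rw [show ((2 : ℤ) • (1 : A)) = 2 by norm_num]
    abel
  rw [h2, zero_mul] at h
  exact sub_eq_zero.mp h

theorem sqAux {A : Type*} [Ring A] (h2 : (2 : A) = 0) {a : A} :
    (1 + a) * (1 + a) = 1 + a * a := by
  have : (1 + a) * (1 + a) = 1 + 2 * a + a * a := by noncomm_ring
  rw [this, h2, zero_mul, add_zero]

section
open FreeAlgebra

noncomputable def qa (i : Fin 2) : RingQuot E0A1Rel :=
  RingQuot.mkAlgHom (ZMod 2) E0A1Rel (FreeAlgebra.ι (ZMod 2) i)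

theorem two0 (A : Type*) [Ring A] [Algebra (ZMod 2) A] : (2 : A) = 0 := by
  have h : (2 : ZMod 2) = 0 := rfl
  have := congrArg (algebraMap (ZMod 2) A) h
  simpa only [map_ofNat, map_zero] using this

theorem qa0 : qa 0 * qa 0 = 0 := by
  have := RingQuot.mkAlgHom_rel (ZMod 2) E0A1Rel.asq
  simpa only [qa, map_mul, map_zero] using this

theorem qa1 : qa 1 * qa 1 = 0 := by
  have := RingQuot.mkAlgHom_rel (ZMod 2) E0A1Rel.bsq
  simpa only [qa, map_mul, map_zero] using this

theorem qab : qa 0 * qa 1 * qa 0 * qa 1 = qa 1 * qa 0 * qa 1 * qa 0 := by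
  have := RingQuot.mkAlgHom_rel (ZMod 2) E0A1Rel.abab
  simpa only [qa, map_mul] using this

noncomputable def bwdHom : DihedralGroup 4 →* RingQuot E0A1Rel := by
  have h2 := two0 (RingQuot E0A1Rel)
  have hs : (1 + qa 0) * (1 + qa 0) = 1 := by rw [sqAux h2, qa0, add_zero]
  have ht : (1 + qa 1) * (1 + qa 1) = 1 := by rw [sqAux h2, qa1, add_zero]
  have hst : (1 + qa 0) * (1 + qa 1) * (1 + qa 0) * (1 + qa 1)
      = (1 + qa 1) * (1 + qa 0) * (1 + qa 1) * (1 + qa 0) := by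
    have h := braidAux h2 qa0 qa1
    rw [qab, ← two_mul, h2, zero_mul] at h
    rw [eq_neg_of_add_eq_zero_left h, neg_eq_iff_add_eq_zero, ← two_mul, h2, zero_mul]
  refine dihHom (1 + qa 0) ((1 + qa 0) * (1 + qa 1)) hs ?_ ?_
  · generalize 1 + qa 0 = s at *
    generalize 1 + qa 1 = t at *
    calc (s * t) ^ 4 = (s * t * s * t) * (s * t * s * t) := by noncomm_ring
      _ = (s * t * s * t) * (t * s * t * s) := by rw [← hst]
      _ = s * t * s * (t * t) * s * t * s := by noncomm_ring
      _ = s * t * (s * s) * t * s := by rw [ht]; noncomm_ring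
      _ = s * (t * t) * s := by rw [hs]; noncomm_ring
      _ = 1 := by rw [ht, mul_one, hs]
  · generalize 1 + qa 0 = s at *
    generalize 1 + qa 1 = t at *
    calc s * t * s = s * t * s * (t * t) := by rw [ht, mul_one]
      _ = s * t * s * t * t := by noncomm_ring
      _ = (s * s) * (t * s * t * s) * t := by rw [hs, hst, one_mul]
      _ = s * (s * t) ^ 3 := by noncomm_ring

theorem bwd0 : bwdHom (.sr 0) = 1 + qa 0 := by
  show (1 + qa 0) * _ ^ (0 : ZMod 4).val = _
  simp

theorem bwd1 : bwdHom (.sr 1) = 1 + qa 1 := by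
  show (1 + qa 0) * ((1 + qa 0) * (1 + qa 1)) ^ 1 = _
  rw [pow_one, ← mul_assoc, sqAux (two0 _), qa0, add_zero, one_mul]

noncomputable def gen (i : Fin 2) : MonoidAlgebra (ZMod 2) (DihedralGroup 4) :=
  1 + MonoidAlgebra.of (ZMod 2) (DihedralGroup 4) (.sr (i.val : ZMod 4))

theorem addSelf (A : Type*) [Ring A] [Algebra (ZMod 2) A] (x : A) : x + x = 0 := by
  rw [← two_mul, two0, zero_mul]

theorem addAdd (A : Type*) [Ring A] [Algebra (ZMod 2) A] (x : A) : 1 + (1 + x) = x := by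
  rw [← add_assoc, addSelf, zero_add]

theorem genSq (i : Fin 2) : gen i * gen i = 0 := by
  rw [gen, sqAux (two0 _), ← map_mul, DihedralGroup.sr_mul_self, map_one, addSelf]

theorem genBraid : gen 0 * gen 1 * gen 0 * gen 1 = gen 1 * gen 0 * gen 1 * gen 0 := by
  have h := braidAux (two0 _) (genSq 0) (genSq 1)
  have e : (DihedralGroup.sr 0 * .sr 1 * .sr 0 * .sr 1 : DihedralGroup 4)
     = .sr 1 * .sr 0 * .sr 1 * .sr 0 := by decide
  have e0 : 1 + gen 0 = MonoidAlgebra.of (ZMod 2) (DihedralGroup 4) (.sr 0) := addAdd _ _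
  have e1 : 1 + gen 1 = MonoidAlgebra.of (ZMod 2) (DihedralGroup 4) (.sr 1) := addAdd _ _
  simp only [e0, e1, ← map_mul] at h
  rw [e, addSelf] at h
  rw [eq_neg_of_add_eq_zero_left h.symm, neg_eq_iff_add_eq_zero, addSelf]

noncomputable def fwd : RingQuot E0A1Rel →ₐ[ZMod 2] MonoidAlgebra (ZMod 2) (DihedralGroup 4) :=
  RingQuot.liftAlgHom (ZMod 2) ⟨FreeAlgebra.lift (ZMod 2) gen, by
    intro x y h
    cases h
    · simpa only [map_mul, map_zero, FreeAlgebra.lift_ι_apply] using genSq 0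
    · simpa only [map_mul, map_zero, FreeAlgebra.lift_ι_apply] using genSq 1
    · simpa only [map_mul, map_zero, FreeAlgebra.lift_ι_apply] using genBraid⟩

theorem fwd_qa (i : Fin 2) : fwd (qa i) = gen i := by
  rw [fwd, qa, RingQuot.liftAlgHom_mkAlgHom_apply, FreeAlgebra.lift_ι_apply]

noncomputable def bwd : MonoidAlgebra (ZMod 2) (DihedralGroup 4) →ₐ[ZMod 2] RingQuot E0A1Rel :=
  MonoidAlgebra.lift (ZMod 2) _ _ bwdHom

theorem bwd_of (g : DihedralGroup 4) :
    bwd (MonoidAlgebra.of (ZMod 2) _ g) = bwdHom g := by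
  rw [bwd, MonoidAlgebra.lift_of]

theorem bwd_gen (i : Fin 2) : bwd (gen i) = qa i := by
  rw [gen, map_add, map_one, bwd_of]
  fin_cases i
  · exact (congrArg (1 + ·) bwd0).trans (addAdd _ _)
  · exact (congrArg (1 + ·) bwd1).trans (addAdd _ _)

end

/-- The `F₂`-algebra presented by generators `a, b` with relations `a² = 0`, `b² = 0` and
`abab = baba` is isomorphic, as an `F₂`-algebra, to the group algebra `F₂[D₈]` of the
dihedral group of order 8. -/
theorem presentedAlgebra_iso_groupAlgebra_dihedral :
    Nonempty (RingQuot E0A1Rel ≃ₐ[ZMod 2] MonoidAlgebra (ZMod 2) (DihedralGroup 4)) := by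
  refine ⟨AlgEquiv.ofAlgHom fwd bwd ?_ ?_⟩
  · have h : (fwd.toRingHom.toMonoidHom.comp bwdHom) =
        MonoidAlgebra.of (ZMod 2) (DihedralGroup 4) := by
      apply dihExt
      · show fwd (bwdHom (.sr 0)) = _
        rw [bwd0, map_add, map_one, fwd_qa]
        exact addAdd _ _
      · show fwd (bwdHom (.sr 1)) = _
        rw [bwd1, map_add, map_one, fwd_qa]
        exact addAdd _ _
    apply MonoidAlgebra.algHom_ext
    intro g
    show fwd (bwd (MonoidAlgebra.of (ZMod 2) _ g)) = MonoidAlgebra.of (ZMod 2) _ g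
    rw [bwd_of]
    exact DFunLike.congr_fun h g
    exact Subsingleton.elim _ _
  · apply RingQuot.ringQuot_ext'
    apply FreeAlgebra.hom_ext
    funext i
    show bwd (fwd (qa i)) = qa i
    rw [fwd_qa, bwd_gen]
end

section
/- The zeroth Hochschild homology of A(1), i.e., the quotient of A(1) by the F₂-linear span of all commutators xy − yx with x, y ∈ A(1), is an F₂-vector space of dimension 5. -/
/-- The relations defining `A(1)`: `Sq¹·Sq¹ = 0` and `Sq²·Sq² + Sq¹·Sq²·Sq¹ = 0`. -/
inductive A1Rel : FreeAlgebra (ZMod 2) (Fin 2) → FreeAlgebra (ZMod 2) (Fin 2) → Prop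
  | sq1 : A1Rel (FreeAlgebra.ι (ZMod 2) 0 * FreeAlgebra.ι (ZMod 2) 0) 0
  | sq2 : A1Rel (FreeAlgebra.ι (ZMod 2) 1 * FreeAlgebra.ι (ZMod 2) 1 +
      FreeAlgebra.ι (ZMod 2) 0 * FreeAlgebra.ι (ZMod 2) 1 * FreeAlgebra.ι (ZMod 2) 0) 0

/-- `A(1)`, the subalgebra of the mod 2 Steenrod algebra generated by `Sq¹` and `Sq²`, presented
as the quotient of the free `F₂`-algebra on two generators `Sq1, Sq2` by the two-sided ideal
generated by `Sq1·Sq1` and `Sq2·Sq2 + Sq1·Sq2·Sq1`. -/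
abbrev A1 : Type := RingQuot A1Rel

/-- The image of `Sq¹` in `A(1)`. -/
noncomputable def Sq1 : A1 := RingQuot.mkAlgHom (ZMod 2) A1Rel (FreeAlgebra.ι (ZMod 2) 0)

/-- The image of `Sq²` in `A(1)`. -/
noncomputable def Sq2 : A1 := RingQuot.mkAlgHom (ZMod 2) A1Rel (FreeAlgebra.ι (ZMod 2) 1)

/-- Milnor's element `Q₀ = Sq¹·Sq² + Sq²·Sq¹` in `A(1)`. -/
noncomputable def Q0 : A1 := Sq1 * Sq2 + Sq2 * Sq1

theorem A1.gen_induction {P : A1 → Prop} (h0 : ∀ r : ZMod 2, P (algebraMap (ZMod 2) A1 r))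
    (h1 : P Sq1) (h2 : P Sq2) (hm : ∀ x y, P x → P y → P (x * y))
    (ha : ∀ x y, P x → P y → P (x + y)) (x : A1) : P x := by
  obtain ⟨y, rfl⟩ := RingQuot.mkAlgHom_surjective (ZMod 2) A1Rel x
  induction y using FreeAlgebra.induction with
  | grade0 r => simpa using h0 r
  | grade1 i =>
    fin_cases i
    · exact h1
    · exact h2
  | mul a b iha ihb => rw [map_mul]; exact hm _ _ iha ihb
  | add a b iha ihb => rw [map_add]; exact ha _ _ iha ihb

theorem A1.r1 : Sq1 * Sq1 = 0 := by
  have := RingQuot.mkAlgHom_rel (ZMod 2) A1Rel.sq1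
  simpa [Sq1] using this

theorem A1.two (x : A1) : x + x = 0 := by
  rw [← two_smul (ZMod 2) x, show (2 : ZMod 2) = 0 from rfl, zero_smul]

theorem A1.r2 : Sq2 * Sq2 = Sq1 * Sq2 * Sq1 := by
  have h := RingQuot.mkAlgHom_rel (ZMod 2) A1Rel.sq2
  have h' : Sq2 * Sq2 + Sq1 * Sq2 * Sq1 = 0 := by simpa [Sq1, Sq2] using h
  have := A1.two (Sq1 * Sq2 * Sq1)
  exact add_right_cancel (h'.trans this.symm)

abbrev A1.V := Fin 8 → ZMod 2

def A1.MA : Module.End (ZMod 2) A1.V where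
  toFun v := ![0, v 0, 0, v 2, 0, v 4, 0, v 6]
  map_add' v w := by ext i; fin_cases i <;> simp
  map_smul' v w := by ext i; fin_cases i <;> simp

def A1.MB : Module.End (ZMod 2) A1.V where
  toFun v := ![0, 0, v 0, 0, v 1, v 2, v 3, v 5]
  map_add' v w := by ext i; fin_cases i <;> simp
  map_smul' v w := by ext i; fin_cases i <;> simp

theorem A1.MA_apply (v : A1.V) : A1.MA v = ![0, v 0, 0, v 2, 0, v 4, 0, v 6] := rfl
theorem A1.MB_apply (v : A1.V) : A1.MB v = ![0, 0, v 0, 0, v 1, v 2, v 3, v 5] := rfl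

noncomputable def A1.rep : A1 →ₐ[ZMod 2] Module.End (ZMod 2) A1.V :=
  RingQuot.liftAlgHom (ZMod 2) ⟨FreeAlgebra.lift (ZMod 2) ![A1.MA, A1.MB], by
    intro x y h
    cases h with
    | sq1 =>
      simp only [map_mul, FreeAlgebra.lift_ι_apply, map_zero]
      refine LinearMap.ext fun v => ?_
      ext i; fin_cases i <;> simp [A1.MA_apply]
    | sq2 =>
      simp only [map_mul, map_add, FreeAlgebra.lift_ι_apply, map_zero]
      refine LinearMap.ext fun v => ?_
      ext i; fin_cases i <;> simp [A1.MA_apply, A1.MB_apply, CharTwo.add_self_eq_zero]⟩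

theorem A1.rep1 : A1.rep Sq1 = A1.MA := by simp [A1.rep, Sq1]
theorem A1.rep2 : A1.rep Sq2 = A1.MB := by simp [A1.rep, Sq2]

def A1.proj : A1.V →ₗ[ZMod 2] (Fin 5 → ZMod 2) where
  toFun v := ![v 0, v 1, v 2, v 3 + v 4, v 7]
  map_add' v w := by ext i; fin_cases i <;> simp; ring
  map_smul' v w := by ext i; fin_cases i <;> simp; ring

noncomputable def A1.f : A1 →ₗ[ZMod 2] (Fin 5 → ZMod 2) :=
  A1.proj ∘ₗ (LinearMap.applyₗ (![1, 0, 0, 0, 0, 0, 0, 0] : A1.V)) ∘ₗ A1.rep.toLinearMap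

theorem A1.f_apply (x : A1) :
    A1.f x = A1.proj (A1.rep x (![1, 0, 0, 0, 0, 0, 0, 0] : A1.V)) := rfl
theorem A1.proj_apply (v : A1.V) : A1.proj v = ![v 0, v 1, v 2, v 3 + v 4, v 7] := rfl

noncomputable def A1.S : Submodule (ZMod 2) A1 :=
  Submodule.span (ZMod 2) {1, Sq1, Sq2, Sq1 * Sq2, Sq2 * Sq1, Sq1 * (Sq2 * Sq1),
    Sq2 * (Sq1 * Sq2), Sq1 * (Sq2 * (Sq1 * Sq2))}

theorem A1.z1 (x : A1) : Sq1 * (Sq1 * x) = 0 := by rw [← mul_assoc, A1.r1, zero_mul]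
theorem A1.z2 : Sq2 * Sq2 = Sq1 * (Sq2 * Sq1) := by rw [A1.r2, mul_assoc]
theorem A1.z3 (x : A1) : Sq2 * (Sq2 * x) = Sq1 * (Sq2 * (Sq1 * x)) := by
  rw [← mul_assoc, A1.r2]; simp only [mul_assoc]
theorem A1.z4 : Sq2 * (Sq1 * (Sq2 * Sq1)) = Sq1 * (Sq2 * (Sq1 * Sq2)) := by
  rw [← A1.z2, A1.z3]
theorem A1.z5 (x : A1) : Sq2 * (Sq1 * (Sq2 * (Sq1 * x))) = Sq1 * (Sq2 * (Sq1 * (Sq2 * x))) := by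
  have := congrArg (· * x) A1.z4
  simpa only [mul_assoc] using this

theorem A1.mul_S (g : A1) (hg : g = Sq1 ∨ g = Sq2) (y : A1) (hy : y ∈ A1.S) : g * y ∈ A1.S := by
  unfold A1.S at hy
  induction hy using Submodule.span_induction with
  | zero => simp
  | add x y _ _ hx hy => rw [mul_add]; exact add_mem hx hy
  | smul r x _ hx => rw [mul_smul_comm]; exact Submodule.smul_mem _ _ hx
  | mem x hx =>
    simp only [Set.mem_insert_iff, Set.mem_singleton_iff] at hx
    rcases hg with rfl | rfl <;> rcases hx with rfl | rfl | rfl | rfl | rfl | rfl | rfl | rfl <;>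
    (try simp only [mul_one, A1.r1, A1.z1, A1.z2, A1.z3, A1.z4, A1.z5, mul_zero, zero_mem]) <;>
    exact Submodule.subset_span (by simp)

theorem A1.mem_S (x : A1) : x ∈ A1.S := by
  have key : ∀ x : A1, ∀ y ∈ A1.S, x * y ∈ A1.S := by
    intro x
    induction x using A1.gen_induction with
    | h0 r =>
      intro y hy
      rw [← Algebra.smul_def]; exact Submodule.smul_mem _ _ hy
    | h1 => exact A1.mul_S _ (Or.inl rfl)
    | h2 => exact A1.mul_S _ (Or.inr rfl)
    | hm x y hx hy => intro z hz; rw [mul_assoc]; exact hx _ (hy _ hz)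
    | ha x y hx hy => intro z hz; rw [add_mul]; exact add_mem (hx _ hz) (hy _ hz)
  simpa using key x 1 (Submodule.subset_span (by simp))

theorem A1.f_gen (g : A1) (hg : g = Sq1 ∨ g = Sq2) (y : A1) : A1.f (g * y) = A1.f (y * g) := by
  have hy := A1.mem_S y
  unfold A1.S at hy
  induction hy using Submodule.span_induction with
  | zero => simp
  | add x y _ _ hx hy => rw [mul_add, add_mul, map_add, map_add, hx, hy]
  | smul r x _ hx => rw [mul_smul_comm, smul_mul_assoc, map_smul, map_smul, hx]
  | mem x hx =>
    simp only [Set.mem_insert_iff, Set.mem_singleton_iff] at hx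
    rcases hg with rfl | rfl <;> rcases hx with rfl | rfl | rfl | rfl | rfl | rfl | rfl | rfl <;>
    simp [A1.f_apply, A1.proj_apply, A1.rep1, A1.rep2, A1.MA_apply, A1.MB_apply]

theorem A1.f_comm (x : A1) : ∀ y, A1.f (x * y) = A1.f (y * x) := by
  induction x using A1.gen_induction with
  | h0 r => intro y; rw [Algebra.commutes]
  | h1 => exact A1.f_gen _ (Or.inl rfl)
  | h2 => exact A1.f_gen _ (Or.inr rfl)
  | hm x y hx hy => intro z; rw [mul_assoc, hx, mul_assoc, hy, mul_assoc]
  | ha x y hx hy => intro z; rw [add_mul, mul_add, map_add, map_add, hx, hy]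

/-- The zeroth Hochschild homology of `A(1)`, i.e. the quotient of `A(1)` by the `F₂`-linear
span of all commutators `x*y - y*x`, is an `F₂`-vector space of dimension 5. -/
theorem hochschildHomology_A1_zero_dim :
    Module.finrank (ZMod 2)
      (A1 ⧸ Submodule.span (ZMod 2) {x : A1 | ∃ a b : A1, x = a * b - b * a}) = 5 := by
  set C : Submodule (ZMod 2) A1 :=
    Submodule.span (ZMod 2) {x : A1 | ∃ a b : A1, x = a * b - b * a} with hC
  have hcomm : ∀ a b : A1, C.mkQ (a * b) = C.mkQ (b * a) := by
    intro a b
    rw [← sub_eq_zero, ← map_sub]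
    exact (Submodule.Quotient.mk_eq_zero C).2 (Submodule.subset_span ⟨a, b, rfl⟩)
  let e : Fin 5 → A1 := ![1, Sq1, Sq2, Sq1 * Sq2, Sq1 * (Sq2 * (Sq1 * Sq2))]
  let w : Fin 5 → A1 ⧸ C := fun i => C.mkQ (e i)
  have hmem : ∀ i, C.mkQ (e i) ∈ Submodule.span (ZMod 2) (Set.range w) :=
    fun i => Submodule.subset_span ⟨i, rfl⟩
  have h5 : C.mkQ (Sq1 * (Sq2 * Sq1)) = 0 := by
    rw [hcomm, mul_assoc, A1.r1, mul_zero, map_zero]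
  have h6 : C.mkQ (Sq2 * (Sq1 * Sq2)) = 0 := by
    rw [hcomm, mul_assoc, A1.z2, A1.z1, map_zero]
  have hspan : Submodule.span (ZMod 2) (Set.range w) = ⊤ := by
    rw [eq_top_iff]
    rintro q -
    obtain ⟨x, rfl⟩ := C.mkQ_surjective q
    have hx := A1.mem_S x
    have : A1.S ≤ (Submodule.span (ZMod 2) (Set.range w)).comap C.mkQ := by
      refine Submodule.span_le.2 ?_
      intro x hx
      simp only [Set.mem_insert_iff, Set.mem_singleton_iff] at hx
      show C.mkQ x ∈ Submodule.span (ZMod 2) (Set.range w)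
      rcases hx with rfl | rfl | rfl | rfl | rfl | rfl | rfl | rfl
      · exact hmem 0
      · exact hmem 1
      · exact hmem 2
      · exact hmem 3
      · rw [hcomm]; exact hmem 3
      · rw [h5]; exact zero_mem _
      · rw [h6]; exact zero_mem _
      · exact hmem 4
    exact this hx
  have hfin : Module.Finite (ZMod 2) (A1 ⧸ C) :=
    ⟨⟨(Set.finite_range w).toFinset, by simpa using hspan⟩⟩
  have hle : C ≤ LinearMap.ker A1.f := by
    refine Submodule.span_le.2 ?_
    rintro _ ⟨a, b, rfl⟩
    show A1.f _ = 0
    rw [map_sub, A1.f_comm, sub_self]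
  apply le_antisymm
  · have := finrank_range_le_card (R := ZMod 2) w
    rw [Set.finrank, hspan, finrank_top] at this
    simpa using this
  · have hs : Function.Surjective (C.liftQ A1.f hle) := by
      intro d
      refine ⟨C.mkQ (∑ i, d i • e i), ?_⟩
      rw [Submodule.mkQ_apply, Submodule.liftQ_apply]
      ext i
      fin_cases i <;>
      simp [Fin.sum_univ_succ, e, A1.f_apply, A1.proj_apply, A1.rep1, A1.rep2, A1.MA_apply,
        A1.MB_apply]
    have := LinearMap.finrank_le_finrank_of_surjective hs
    simpa using this
end
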